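/- arXiv:math/0509549 — 2 statements merged into one kernel-verified Lean document; each statement's English description precedes it below -/
import Mathlib

section
/- Let k be a field and z ∈ O a nonzero split octonion. (i) If Q(z) ≠ 0, then L(z) = R(z) = O. (ii) If Q(z) = 0, then L(z) and R(z) are 4-dimensional k-subspaces of O on which Q vanishes identically. (iii) If z₁, z₂ ∈ O are nonzero with Q(z₁) = Q(z₂) = 0, then z₂ ∈ L(z₁) ⟺ z₁ ∈ L(z₂) ⟺ conj(z₁)*z₂ = 0. -/
/-!
Octonions satisfy `z * (conj w * x) + w * (conj z * x) = ⟨z, w⟩ x`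
(`omul_oconj_add`), the linearization of `z * (conj z * x) = Q(z) x`. For `Q(z) ≠ 0` the
latter makes left multiplication by `z` surjective.

Let `Q(z) = 0` and `z ≠ 0`. Then `L(z)` is contained in the kernel of left multiplication by
`conj z`. Conversely, the form is nondegenerate, so there is `w` with `⟨z, w⟩ ≠ 0`, and the
linearized identity exhibits any `x` killed by `conj z` as a multiple of `z * (conj w * x)`.
Hence `L(z) = ker (conj z * ·)` (`mem_Lsub_iff`), and conjugating
`conj z₁ * z₂ = 0` makes membership `z₂ ∈ L(z₁)` symmetric. Left multiplication by `conj z` is the adjoint of left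
multiplication by `z`, so that kernel is also the orthogonal complement of `L(z)`; as `L(z)` is
its own orthogonal complement in dimension 8, it has dimension 4. Multiplicativity of `Q` makes it
totally isotropic. The claims on `R(z)` follow from `R(z) = conj (L(conj z))`.
-/

open Matrix

/-- 2×2 matrices over `R`. -/
abbrev M2 (R : Type*) := Matrix (Fin 2) (Fin 2) R

/-- The split octonions over `R`: pairs of 2×2 matrices. -/
abbrev Oct (R : Type*) := M2 R × M2 R

variable {R : Type*} [CommRing R]

/-- Octonion multiplication (Cayley–Dickson on 2×2 matrices). -/
def omul (x y : Oct R) : Oct R :=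
  (x.1 * y.1 - y.2.adjugate * x.2, x.2 * y.1.adjugate + y.2 * x.1)

/-- Octonion conjugation. -/
def oconj (x : Oct R) : Oct R := (x.1.adjugate, -x.2)

/-- The norm of a split octonion. -/
def oQ (x : Oct R) : R := x.1.det + x.2.det

/-- The associated bilinear form. -/
def obil (x y : Oct R) : R := oQ (x + y) - oQ x - oQ y

lemma adj_add (A B : M2 R) : (A + B).adjugate = A.adjugate + B.adjugate := by
  ext i j
  fin_cases i <;> fin_cases j <;>
    simp [Matrix.adjugate_fin_two] <;> ring

lemma adj_smul (c : R) (A : M2 R) : (c • A).adjugate = c • A.adjugate := by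
  rw [Matrix.adjugate_smul]
  norm_num

/-- Left multiplication by `z` as a linear map. -/
def Lmap (z : Oct R) : Oct R →ₗ[R] Oct R where
  toFun w := omul z w
  map_add' a b := by
    simp only [omul, Prod.fst_add, Prod.snd_add, adj_add, Prod.mk_add_mk]
    rw [Prod.ext_iff]
    constructor <;> dsimp only <;> noncomm_ring
  map_smul' c a := by
    simp only [omul, Prod.smul_fst, Prod.smul_snd, adj_smul, RingHom.id_apply, Prod.smul_mk]
    rw [Prod.ext_iff]
    constructor <;> dsimp only <;>
      simp [Matrix.mul_smul, Matrix.smul_mul, smul_sub]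

/-- Right multiplication by `z` as a linear map. -/
def Rmap (z : Oct R) : Oct R →ₗ[R] Oct R where
  toFun w := omul w z
  map_add' a b := by
    simp only [omul, Prod.fst_add, Prod.snd_add, Prod.mk_add_mk]
    rw [Prod.ext_iff]
    constructor <;> dsimp only <;> noncomm_ring
  map_smul' c a := by
    simp only [omul, Prod.smul_fst, Prod.smul_snd, RingHom.id_apply, Prod.smul_mk]
    rw [Prod.ext_iff]
    constructor <;> dsimp only <;>
      simp [Matrix.mul_smul, Matrix.smul_mul, smul_sub]

/-- `L(z)`: the range of left multiplication by `z`. -/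
def Lsub (z : Oct R) : Submodule R (Oct R) := LinearMap.range (Lmap z)

/-- `R(z)`: the range of right multiplication by `z`. -/
def Rsub (z : Oct R) : Submodule R (Oct R) := LinearMap.range (Rmap z)

section Identities

lemma adj_entry (A : M2 R) : A.adjugate 0 0 = A 1 1 ∧ A.adjugate 0 1 = -A 0 1 ∧
    A.adjugate 1 0 = -A 1 0 ∧ A.adjugate 1 1 = A 0 0 := by
  simp [Matrix.adjugate_fin_two]

lemma oct_ext {S : Type*} {x y : Oct S} (h₁ : ∀ i j, x.1 i j = y.1 i j) (h₂ : ∀ i j, x.2 i j = y.2 i j) :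
    x = y :=
  Prod.ext (Matrix.ext h₁) (Matrix.ext h₂)

lemma obil_eq (x y : Oct R) : obil x y =
    x.1 0 0 * y.1 1 1 + x.1 1 1 * y.1 0 0 - x.1 0 1 * y.1 1 0 - x.1 1 0 * y.1 0 1 +
    (x.2 0 0 * y.2 1 1 + x.2 1 1 * y.2 0 0 - x.2 0 1 * y.2 1 0 - x.2 1 0 * y.2 0 1) := by
  simp only [obil, oQ, Matrix.det_fin_two, Prod.fst_add, Prod.snd_add, Matrix.add_apply]
  ring

lemma oconj_oconj (x : Oct R) : oconj (oconj x) = x := by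
  apply oct_ext <;> intro i j <;> fin_cases i <;> fin_cases j <;>
    simp [oconj, adj_entry]

lemma oQ_oconj (x : Oct R) : oQ (oconj x) = oQ x := by
  simp [oQ, oconj, adj_entry, Matrix.det_fin_two]
  ring

lemma oQ_omul (x y : Oct R) : oQ (omul x y) = oQ x * oQ y := by
  simp [oQ, omul, adj_entry, Matrix.det_fin_two, Matrix.mul_apply,
    Fin.sum_univ_two]
  ring

lemma oconj_omul (x y : Oct R) : oconj (omul x y) = omul (oconj y) (oconj x) := by
  apply oct_ext <;> intro i j <;> fin_cases i <;> fin_cases j <;>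
    simp [omul, oconj, adj_entry, Matrix.mul_apply, Fin.sum_univ_two] <;> ring

lemma oconj_omul_omul (z x : Oct R) : omul (oconj z) (omul z x) = oQ z • x := by
  apply oct_ext <;> intro i j <;> fin_cases i <;> fin_cases j <;>
    simp [oQ, omul, oconj, adj_entry, Matrix.mul_apply, Fin.sum_univ_two,
      Matrix.det_fin_two] <;> ring

lemma omul_oconj_omul (z x : Oct R) : omul z (omul (oconj z) x) = oQ z • x := by
  simpa only [oconj_oconj, oQ_oconj] using oconj_omul_omul (oconj z) x

/-- Linearization in `z` of `z * (conj z * x) = Q(z) x`. -/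
lemma omul_oconj_add (z w x : Oct R) :
    omul z (omul (oconj w) x) + omul w (omul (oconj z) x) = obil z w • x := by
  rw [obil_eq]
  apply oct_ext <;> intro i j <;> fin_cases i <;> fin_cases j <;>
    simp [omul, oconj, adj_entry, Matrix.mul_apply, Fin.sum_univ_two] <;> ring

/-- Left multiplications by `z` and by `conj z` are adjoint for the norm form. -/
lemma obil_omul (z x y : Oct R) : obil (omul z x) y = obil x (omul (oconj z) y) := by
  rw [obil_eq, obil_eq]
  simp [omul, oconj, adj_entry, Matrix.mul_apply, Fin.sum_univ_two]
  ring

lemma obil_comm (x y : Oct R) : obil x y = obil y x := by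
  rw [obil_eq, obil_eq]
  ring

lemma eq_zero_of_obil {x : Oct R} (h : ∀ y, obil x y = 0) : x = 0 := by
  simp only [obil_eq] at h
  -- pairing with the eight matrix units reads off the eight entries
  have a := h (!![1, 0; 0, 0], 0)
  have b := h (!![0, 1; 0, 0], 0)
  have c := h (!![0, 0; 1, 0], 0)
  have d := h (!![0, 0; 0, 1], 0)
  have e := h (0, !![1, 0; 0, 0])
  have f := h (0, !![0, 1; 0, 0])
  have g := h (0, !![0, 0; 1, 0])
  have l := h (0, !![0, 0; 0, 1])
  simp at a b c d e f g l
  apply oct_ext <;> intro i j <;> fin_cases i <;> fin_cases j <;> simp [*]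

/-- The norm form as a bundled bilinear form. -/
def obilForm : LinearMap.BilinForm R (Oct R) :=
  LinearMap.mk₂ R obil
    (fun x y z => by simp only [obil_eq, Prod.fst_add, Prod.snd_add, Matrix.add_apply]; ring)
    (fun c x y => by
      simp only [obil_eq, Prod.smul_fst, Prod.smul_snd, Matrix.smul_apply, smul_eq_mul]; ring)
    (fun x y z => by simp only [obil_eq, Prod.fst_add, Prod.snd_add, Matrix.add_apply]; ring)
    (fun c x y => by
      simp only [obil_eq, Prod.smul_fst, Prod.smul_snd, Matrix.smul_apply, smul_eq_mul]; ring)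

/-- Conjugation as a linear equivalence. -/
def oconjEquiv : Oct R ≃ₗ[R] Oct R where
  toFun := oconj
  invFun := oconj
  left_inv := oconj_oconj
  right_inv := oconj_oconj
  map_add' x y := by
    simp only [oconj, Prod.fst_add, Prod.snd_add, adj_add, Prod.mk_add_mk, neg_add]
  map_smul' c x := by
    simp only [oconj, Prod.smul_fst, Prod.smul_snd, adj_smul, RingHom.id_apply, Prod.smul_mk,
      smul_neg]

lemma oconjEquiv_apply (x : Oct R) : oconjEquiv x = oconj x := rfl

lemma oconj_eq_zero {x : Oct R} : oconj x = 0 ↔ x = 0 :=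
  (oconjEquiv (R := R)).map_eq_zero_iff

lemma omul_smul (c : R) (x y : Oct R) : omul x (c • y) = c • omul x y := (Lmap x).map_smul c y

lemma omul_zero' (x : Oct R) : omul x 0 = 0 := (Lmap x).map_zero

lemma mem_Lsub {z x : Oct R} : x ∈ Lsub z ↔ ∃ w, omul z w = x := Iff.rfl

lemma mem_Rsub {z x : Oct R} : x ∈ Rsub z ↔ ∃ w, omul w z = x := Iff.rfl

lemma Rsub_eq_map (z : Oct R) :
    Rsub z = (Lsub (oconj z)).map (oconjEquiv (R := R) : Oct R →ₗ[R] Oct R) := by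
  ext x
  simp only [Submodule.mem_map, mem_Rsub, mem_Lsub, LinearEquiv.coe_coe, oconjEquiv_apply]
  constructor
  · rintro ⟨w, rfl⟩
    exact ⟨_, ⟨oconj w, rfl⟩, by rw [oconj_omul, oconj_oconj, oconj_oconj]⟩
  · rintro ⟨_, ⟨w, rfl⟩, rfl⟩
    exact ⟨oconj w, by rw [oconj_omul, oconj_oconj]⟩

end Identities

section Field

variable {k : Type*} [Field k]

lemma Lsub_eq_top {z : Oct k} (h : oQ z ≠ 0) : Lsub z = ⊤ := by
  refine eq_top_iff.2 fun x _ => mem_Lsub.2 ⟨(oQ z)⁻¹ • omul (oconj z) x, ?_⟩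
  rw [omul_smul, omul_oconj_omul, inv_smul_smul₀ h]

/-- An isotropic `z ≠ 0` has `L(z)` equal to the kernel of left multiplication by `conj z`. -/
lemma mem_Lsub_iff {z : Oct k} (hz : z ≠ 0) (h : oQ z = 0) (x : Oct k) :
    x ∈ Lsub z ↔ omul (oconj z) x = 0 := by
  constructor
  · rintro ⟨w, rfl⟩
    exact (oconj_omul_omul z w).trans (by rw [h, zero_smul])
  · intro hx
    obtain ⟨w, hw⟩ : ∃ w, obil z w ≠ 0 := by
      by_contra! hc
      exact hz (eq_zero_of_obil hc)
    have key := omul_oconj_add z w x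
    rw [hx, omul_zero', add_zero] at key
    exact mem_Lsub.2 ⟨(obil z w)⁻¹ • omul (oconj w) x, by
      rw [omul_smul, key, inv_smul_smul₀ hw]⟩

lemma obilForm_nondegenerate : (obilForm (R := k)).Nondegenerate :=
  ⟨fun _ h => eq_zero_of_obil h,
    fun _ h => eq_zero_of_obil fun y => (obil_comm _ _).trans (h y)⟩

/-- `L(z)` is its own orthogonal complement when `z ≠ 0` is isotropic. -/
lemma orthogonal_Lsub {z : Oct k} (hz : z ≠ 0) (h : oQ z = 0) :
    obilForm.orthogonal (Lsub z) = Lsub z := by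
  ext x
  rw [mem_Lsub_iff hz h, LinearMap.BilinForm.mem_orthogonal_iff]
  constructor
  · intro hx
    refine eq_zero_of_obil fun y => ?_
    rw [obil_comm, ← obil_omul]
    exact hx _ (mem_Lsub.2 ⟨y, rfl⟩)
  · rintro hx _ ⟨w, rfl⟩
    change obil (omul z w) x = 0
    rw [obil_omul, hx, obil_eq]
    simp

lemma finrank_Lsub {z : Oct k} (hz : z ≠ 0) (h : oQ z = 0) :
    Module.finrank k (Lsub z) = 4 := by
  have h₁ := LinearMap.BilinForm.finrank_orthogonal obilForm_nondegenerate (Lsub z)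
  have h₂ : Module.finrank k (Oct k) = 8 := by simp [Module.finrank_matrix]
  rw [orthogonal_Lsub hz h, h₂] at h₁
  omega

end Field

theorem stmt1 (k : Type*) [Field k] (z : Oct k) (hz : z ≠ 0) :
    (oQ z ≠ 0 → Lsub z = ⊤ ∧ Rsub z = ⊤) ∧
    (oQ z = 0 →
      (Module.finrank k ↥(Lsub z) = 4 ∧ ∀ w ∈ Lsub z, oQ w = 0) ∧
      (Module.finrank k ↥(Rsub z) = 4 ∧ ∀ w ∈ Rsub z, oQ w = 0)) ∧
    (∀ z₁ z₂ : Oct k, z₁ ≠ 0 → z₂ ≠ 0 → oQ z₁ = 0 → oQ z₂ = 0 →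
      ((z₂ ∈ Lsub z₁ ↔ z₁ ∈ Lsub z₂) ∧ (z₂ ∈ Lsub z₁ ↔ omul (oconj z₁) z₂ = 0))) := by
  refine ⟨fun h => ⟨Lsub_eq_top h, ?_⟩, fun h => ⟨⟨finrank_Lsub hz h, ?_⟩, ?_, ?_⟩, ?_⟩
  · rw [Rsub_eq_map, Lsub_eq_top (by rwa [oQ_oconj]), Submodule.map_top, LinearEquiv.range]
  · rintro _ ⟨w, rfl⟩
    exact (oQ_omul z w).trans (by rw [h, zero_mul])
  · rw [Rsub_eq_map, LinearEquiv.finrank_map_eq]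
    exact finrank_Lsub (oconj_eq_zero.not.2 hz) (by rwa [oQ_oconj])
  · rintro _ ⟨w, rfl⟩
    exact (oQ_omul w z).trans (by rw [h, mul_zero])
  · intro z₁ z₂ h₁ h₂ q₁ q₂
    refine ⟨?_, mem_Lsub_iff h₁ q₁ z₂⟩
    rw [mem_Lsub_iff h₁ q₁, mem_Lsub_iff h₂ q₂, ← oconj_eq_zero, oconj_omul, oconj_oconj]
end

section
/- Let k be a field, V and W finite-dimensional k-vector spaces, X ⊆ V a subset, and f, g : V → W linear maps. Assume: (i) for every x ∈ X with f(x) ≠ 0 there exists λ ∈ k with g(x) = λ•f(x); (ii) for all linear forms φ, ψ, χ, ω on V, if the quadratic form φ·ψ − χ·ω vanishes at every point of X, then it vanishes identically on V; (iii) the rank of f (the dimension of its range) is at least 2. Then there exists λ ∈ k such that g = λ•f. -/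
/-!
For linear forms `α, β` on `W`, the quadratic form `(α ∘ f) (β ∘ g) - (β ∘ f) (α ∘ g)` vanishes on
`X`, because `f x` and `g x` are linearly dependent there; so it vanishes on `V`. Letting `α` and
`β` vary, `g v` is a multiple of `f v` for every `v : V` with `f v ≠ 0`. When `f u` and `f v` are
linearly independent, comparing at `u`, `v` and `u + v` shows that the multiples at `u` and `v`
agree. Fix `u₁, u₂` with independent images and let `c` be the multiple at `u₁`. If `f v` is not in
the line of `f u₁`, then `g v = c • f v`; otherwise `f (v + u₂)` is not in that line, and
`g v = g (v + u₂) - g u₂ = c • f v`, which also covers `f v = 0`.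
-/

/-- Two linear maps that are proportional at each point where `f` does not vanish have the same
ratio at any two points whose images under `f` are independent. -/
theorem eq_smul_of_notMem_span {k V W : Type*} [Field k]
    [AddCommGroup V] [Module k V] [AddCommGroup W] [Module k W]
    {f g : V →ₗ[k] W} (h : ∀ v, f v ≠ 0 → ∃ c : k, g v = c • f v)
    {u v : V} (hu : f u ≠ 0) (hv : f v ∉ Submodule.span k {f u})
    {c : k} (hc : g u = c • f u) : g v = c • f v := by
  have hv0 : f v ≠ 0 := fun h0 => hv (h0 ▸ Submodule.zero_mem _)
  have huv0 : f (u + v) ≠ 0 := fun h0 => hv <| by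
    rw [map_add] at h0
    exact Submodule.mem_span_singleton.2 ⟨-1, by rw [neg_one_smul, eq_neg_of_add_eq_zero_left h0,
      neg_neg]⟩
  obtain ⟨d, hd⟩ := h v hv0
  obtain ⟨e, he⟩ := h (u + v) huv0
  rw [map_add, map_add, hc, hd, smul_add] at he
  have key : (d - e) • f v = (e - c) • f u := by
    rw [sub_smul, sub_smul, sub_eq_sub_iff_add_eq_add, add_comm, he]
  have hde : d - e = 0 := by
    by_contra hne
    refine hv (Submodule.mem_span_singleton.2 ⟨(d - e)⁻¹ * (e - c), ?_⟩)
    rw [mul_smul, ← key, inv_smul_smul₀ hne]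
  rw [hde, zero_smul, eq_comm, smul_eq_zero, or_iff_left hu] at key
  rw [hd, sub_eq_zero.1 hde, sub_eq_zero.1 key]

theorem stmt7 {k V W : Type*} [Field k]
    [AddCommGroup V] [Module k V] [FiniteDimensional k V]
    [AddCommGroup W] [Module k W] [FiniteDimensional k W]
    (X : Set V) (f g : V →ₗ[k] W)
    (h1 : ∀ x ∈ X, f x ≠ 0 → ∃ c : k, g x = c • f x)
    (h2 : ∀ φ ψ χ ω : V →ₗ[k] k,
      (∀ x ∈ X, φ x * ψ x - χ x * ω x = 0) → ∀ v : V, φ v * ψ v - χ v * ω v = 0)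
    (h3 : 2 ≤ Module.finrank k ↥(LinearMap.range f)) :
    ∃ c : k, g = c • f := by
  have minors (α β : W →ₗ[k] k) (v : V) : α (f v) * β (g v) - β (f v) * α (g v) = 0 := by
    refine h2 (α ∘ₗ f) (β ∘ₗ g) (β ∘ₗ f) (α ∘ₗ g) (fun x hx => ?_) v
    by_cases h0 : f x = 0
    · simp [h0]
    · obtain ⟨c, hc⟩ := h1 x hx h0
      simp only [LinearMap.comp_apply, hc, map_smul, smul_eq_mul]
      ring
  have h (v : V) (hv : f v ≠ 0) : ∃ c : k, g v = c • f v := by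
    obtain ⟨α, hα⟩ : ∃ α : Module.Dual k W, α (f v) ≠ 0 := by
      by_contra! hall
      exact hv ((Module.forall_dual_apply_eq_zero_iff k _).1 hall)
    have hz : α (f v) • g v - α (g v) • f v = 0 := by
      refine (Module.forall_dual_apply_eq_zero_iff k _).1 fun β => ?_
      simp only [map_sub, map_smul, smul_eq_mul]
      linear_combination minors α β v
    refine ⟨(α (f v))⁻¹ * α (g v), ?_⟩
    rw [mul_smul, ← sub_eq_zero.1 hz, inv_smul_smul₀ hα]
  -- The range of `f` is not contained in a line.
  have hline (w : W) : ∃ u, f u ∉ Submodule.span k {w} := by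
    by_contra! hall
    have hle : LinearMap.range f ≤ Submodule.span k {w} := by
      rintro _ ⟨u, rfl⟩
      exact hall u
    have := (Submodule.finrank_mono hle).trans (finrank_span_le_card {w})
    rw [Set.toFinset_singleton, Finset.card_singleton] at this
    omega
  obtain ⟨u₁, hu₁⟩ := hline 0
  have hu₁ : f u₁ ≠ 0 := by simpa using hu₁
  obtain ⟨u₂, hu₂⟩ := hline (f u₁)
  obtain ⟨c, hc⟩ := h u₁ hu₁
  refine ⟨c, LinearMap.ext fun v => ?_⟩
  rw [LinearMap.smul_apply]
  by_cases hv : f v ∈ Submodule.span k {f u₁}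
  · have hsum : f (v + u₂) ∉ Submodule.span k {f u₁} := by
      rwa [map_add, Submodule.add_mem_iff_right _ hv]
    have e := eq_smul_of_notMem_span h hu₁ hsum hc
    rw [map_add, map_add, smul_add, eq_smul_of_notMem_span h hu₁ hu₂ hc] at e
    exact add_right_cancel e
  · exact eq_smul_of_notMem_span h hu₁ hv hc
end
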